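/- arXiv:0902.4448 — 3 statements merged into one kernel-verified Lean document; each statement's English description precedes it below -/
import Mathlib

section
/- For every cardinal ρ and all infinite cardinals κ and λ, the relation (κ,<λ)⤳([ρ]^{<ω},⊆) holds if and only if the relation (κ,<ω,λ)→ρ holds. -/
/-!
Forward direction (`arrowOmega_of_leadsto`): given a set mapping `F` on finite sets,
let `F'` send a finite set `Y` to the
finite union of all `F X` with `X ⊆ Y`, and apply the poset relation to `F'`. The images
`f {b}` of the singletons form a free set: if `f {b} ∈ F X` with `X = {f {c} | c ∈ x}`, the
inequality `x ≤ x ∪ {b}` puts `f {b}` into `f '' Iic x`, and injectivity gives `b ∈ x`.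

Backward direction (`leadsto_of_arrowOmega`): as `κ` is infinite there is a bijection `φ`
from the finite subsets of `κ` to
`κ`. Given `F`, let `G X` be the union of the finite sets coded by the elements of
`F (φ '' {s | s ⊆ X})`; it still has size `< λ`. If `H` is free for `G` and `e : ρ ≃ H`, then
`f x = φ (e '' x)` works: if `φ s` lies in `F (f '' Iic x)` and `s ⊆ H`, then
`s ⊆ G (e '' x) ∩ H ⊆ e '' x`.
-/

universe u v w

open Cardinal

/-- The relation `(κ,<λ)⤳P`: for every map `F` from the powerset of (a set of size) `κ`
to the subsets of size `< λ`, there is an injective `f : P → κ` such that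
`F(f''(P↓x)) ∩ f''(P↓y) ⊆ f''(P↓x)` whenever `x ≤ y` in `P`. -/
def Leadsto (κ lam : Cardinal.{u}) (P : Type v) [PartialOrder P] : Prop :=
  ∀ A : Type u, #A = κ →
    ∀ F : Set A → Set A, (∀ X : Set A, #↥(F X) < lam) →
      ∃ f : P → A, Function.Injective f ∧
        ∀ x y : P, x ≤ y →
          F (f '' Set.Iic x) ∩ f '' Set.Iic y ⊆ f '' Set.Iic x

/-- The relation `(κ,<ω,λ)→ρ`: every set mapping `F : [κ]^{<ω} → [κ]^{<λ}` has a free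
set of cardinality `ρ`. -/
def ArrowOmega (κ lam ρ : Cardinal.{u}) : Prop :=
  ∀ A : Type u, #A = κ →
    ∀ F : Set A → Set A, (∀ X : Set A, X.Finite → #↥(F X) < lam) →
      ∃ H : Set A, #↥H = ρ ∧ ∀ X : Set A, X ⊆ H → X.Finite → F X ∩ H ⊆ X

theorem mk_biUnion_lt_of_finite {A ι : Type u} {lam : Cardinal.{u}} (hlam : ℵ₀ ≤ lam)
    {S : Set ι} (hS : S.Finite) (g : ι → Set A) (hg : ∀ i ∈ S, #↥(g i) < lam) :
    #↥(⋃ i ∈ S, g i) < lam := by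
  induction S, hS using Set.Finite.induction_on with
  | empty => simpa using aleph0_pos.trans_le hlam
  | @insert a s _ _ ih =>
    rw [Set.biUnion_insert]
    exact (mk_union_le _ _).trans_lt (add_lt_of_lt hlam (hg a (by simp))
      (ih fun i hi => hg i (Set.mem_insert_of_mem _ hi)))

theorem mk_biUnion_finset_lt {A ι : Type u} {lam : Cardinal.{u}} (hlam : ℵ₀ ≤ lam)
    {S : Set ι} (hS : #↥S < lam) (g : ι → Finset A) :
    #↥(⋃ i ∈ S, (g i : Set A)) < lam := by
  rcases S.finite_or_infinite with hfin | hinf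
  · exact (hfin.biUnion fun i _ => (g i).finite_toSet).lt_aleph0.trans_le hlam
  · have hinf' : ℵ₀ ≤ #↥S := infinite_iff.1 hinf.to_subtype
    refine lt_of_le_of_lt ?_ hS
    calc #↥(⋃ i ∈ S, (g i : Set A)) ≤ #↥S * ⨆ i : S, #↥(g i.1 : Set A) := mk_biUnion_le _ _
      _ ≤ #↥S * ℵ₀ := by
        gcongr
        exact ciSup_le' fun i => ((g i.1).finite_toSet).lt_aleph0.le
      _ = #↥S := mul_aleph0_eq hinf'

/-- The images of singletons under a map witnessing the poset relation form a free set. -/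
theorem arrowOmega_of_leadsto {κ lam : Cardinal.{u}} (hlam : ℵ₀ ≤ lam) {B : Type u}
    (h : Leadsto κ lam {X : Set B // X.Finite}) : ArrowOmega κ lam #B := by
  classical
  intro A hA F hF
  -- `Leadsto` needs the bound on all sets, so infinite sets are sent to `∅`.
  obtain ⟨f, hf, hfree⟩ := h A hA
    (fun Y => if Y.Finite then ⋃ X ∈ 𝒫 Y, F X else ∅) (by
      intro Y
      split_ifs with hY
      · exact mk_biUnion_lt_of_finite hlam hY.finite_subsets F
          fun X hX => hF X (hY.subset hX)
      · simpa using aleph0_pos.trans_le hlam)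
  let g : B → A := fun b => f ⟨{b}, Set.finite_singleton b⟩
  have hg : Function.Injective g := fun a b hab => by
    simpa using congrArg Subtype.val (hf hab)
  refine ⟨Set.range g, mk_range_eq g hg, ?_⟩
  rintro X hXH hX _ ⟨hbF, b, rfl⟩
  have hx : (g ⁻¹' X).Finite := hX.preimage hg.injOn
  let x : {X : Set B // X.Finite} := ⟨g ⁻¹' X, hx⟩
  let y : {X : Set B // X.Finite} := ⟨insert b (g ⁻¹' X), hx.insert b⟩
  have hIic : (f '' Set.Iic x).Finite := by
    refine Set.Finite.image _ (Set.Finite.of_finite_image (f := Subtype.val) ?_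
      Subtype.val_injective.injOn)
    refine hx.finite_subsets.subset ?_
    rintro _ ⟨z, hz, rfl⟩
    exact hz
  have hXsub : X ⊆ f '' Set.Iic x := by
    intro a ha
    obtain ⟨c, rfl⟩ := hXH ha
    exact ⟨_, (Set.singleton_subset_iff.2 ha : {c} ⊆ g ⁻¹' X), rfl⟩
  have hmem := hfree x y (Set.subset_insert _ _) ⟨by
      rw [if_pos hIic]
      exact Set.mem_biUnion (Set.mem_powerset hXsub) hbF,
    ⟨_, Set.singleton_subset_iff.2 (Set.mem_insert _ _), rfl⟩⟩
  obtain ⟨z, hz, hzb⟩ := hmem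
  rw [hf hzb] at hz
  have hz' : {b} ⊆ g ⁻¹' X := hz
  exact hz' (Set.mem_singleton b)

/-- A free set for the decoded mapping yields the required map on finite subsets, by coding
finite subsets of `A` as elements of `A`. -/
theorem leadsto_of_arrowOmega {κ lam : Cardinal.{u}} (hκ : ℵ₀ ≤ κ) (hlam : ℵ₀ ≤ lam)
    {B : Type u} (h : ArrowOmega κ lam #B) : Leadsto κ lam {X : Set B // X.Finite} := by
  classical
  intro A hA F hF
  have : Infinite A := infinite_iff.2 (hA ▸ hκ)
  obtain ⟨φ⟩ : Nonempty (Finset A ≃ A) := Cardinal.eq.1 (mk_finset_of_infinite A)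
  obtain ⟨H, hH, hfree⟩ := h A hA
    (fun X => ⋃ a ∈ F (φ '' {s | (s : Set A) ⊆ X}), (φ.symm a : Set A))
    (fun X _ => mk_biUnion_finset_lt hlam (hF _) _)
  obtain ⟨e⟩ := Cardinal.eq.1 hH.symm
  let e' : B ↪ A := e.toEmbedding.trans (Function.Embedding.subtype _)
  have he' : ∀ b, e' b ∈ H := fun b => (e b).2
  let f : {X : Set B // X.Finite} → A := fun x => φ (x.2.toFinset.map e')
  have himg : ∀ x : {X : Set B // X.Finite},
      f '' Set.Iic x = φ '' {s | (s : Set A) ⊆ e' '' x.1} := by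
    intro x
    apply Set.Subset.antisymm
    · rintro _ ⟨z, hz, rfl⟩
      refine ⟨_, ?_, rfl⟩
      have hz' : z.1 ⊆ x.1 := hz
      change ((z.2.toFinset.map e' : Finset A) : Set A) ⊆ e' '' x.1
      rw [Finset.coe_map, Set.Finite.coe_toFinset]
      exact Set.image_mono hz'
    · rintro _ ⟨s, hs, rfl⟩
      refine ⟨⟨e' ⁻¹' s, s.finite_toSet.preimage e'.injective.injOn⟩, ?_, ?_⟩
      · intro b hb
        obtain ⟨c, hc, hcb⟩ := hs hb
        exact e'.injective hcb ▸ hc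
      · refine congrArg φ (Finset.coe_injective ?_)
        have hr : (s : Set A) ⊆ Set.range e' := hs.trans (Set.image_subset_range _ _)
        simpa [Set.image_preimage_eq_inter_range] using hr
  refine ⟨f, fun x z hxz => ?_, fun x y _ => ?_⟩
  · have := Finset.map_injective e' (φ.injective hxz)
    exact Subtype.ext (by simpa using this)
  · rw [himg x, himg y]
    rintro _ ⟨ha, s, hs, rfl⟩
    refine ⟨s, fun a has => ?_, rfl⟩
    have hxH : e' '' x.1 ⊆ H := by rintro _ ⟨b, _, rfl⟩; exact he' b
    refine hfree _ hxH (x.2.image _) ⟨Set.mem_biUnion ha (by simpa using has), ?_⟩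
    obtain ⟨b, _, rfl⟩ := hs has
    exact he' b

/-- The statements `(κ,<λ)⤳([ρ]^{<ω},⊆)` and `(κ,<ω,λ)→ρ` are equivalent, for every
cardinal `ρ` and all infinite cardinals `κ`, `λ`. -/
theorem stmt2 (κ lam ρ : Cardinal.{u}) (hκ : ℵ₀ ≤ κ) (hlam : ℵ₀ ≤ lam)
    (B : Type u) (hB : #B = ρ) :
    Leadsto κ lam {X : Set B // X.Finite} ↔ ArrowOmega κ lam ρ := by
  subst hB
  exact ⟨arrowOmega_of_leadsto hlam, leadsto_of_arrowOmega hκ hlam⟩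
end

section
/- (Product Lemma) Let P and Q be lower finite posets each having a least element, and let α, β, γ be infinite cardinals with α ≤ β ≤ γ and |Q| strictly less than the cofinality of α. If (β,<α)⤳P and (γ,<β⁺)⤳Q hold, then (γ,<α)⤳(P × Q) holds, where P × Q carries the componentwise ordering and β⁺ is the cardinal successor of β. -/
/-!
Identify the underlying set of size `γ` with a product `B × A`, where `#B = β` and `#A = γ`, and let
`F` be the given map on subsets of `B × A`. The embedding of `P × Q` is built one coordinate at a
time, in the form `(p, q) ↦ (f p, g q)`, so that the lower set of `(p, q)` has as image the
rectangle `f '' Iic p ×ˢ g '' Iic q`. An injection satisfying the conclusion of `⤳` for a given set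
map is called free for that map.

* For finite `X ⊆ A`, let `G X` (`sndTrace F X`) collect the second coordinates of points of `F Y`, where
  `Y` ranges over the finite subsets of `B × X`. There are at most `β` such `Y`, so `#(G X) ≤ β`, and
  `(γ,<β⁺)⤳Q` yields an injection `g : Q → A` that is free for `G`.
* For `X ⊆ B`, let `H X` collect the first coordinates of points of `F (X ×ˢ g '' Iic q)`, where
  `q` ranges over `Q`. As `#Q < cf α`, we have `#(H X) < α`, and `(β,<α)⤳P` yields an injection
  `f : P → B` that is free for `H`.

A point of `F (f '' Iic p ×ˢ g '' Iic q)` then has its second coordinate in `G (g '' Iic q)`, the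
rectangle being finite, and its first coordinate in `H (f '' Iic p)`; freeness of `g` and `f` puts
it back into the rectangle.
-/

universe u v w

open Cardinal

/-- The form in which `#Q < cf α` is used; `α` need not be regular. -/
theorem mk_iUnion_lt_of_lt_cof {ι X : Type u} {α : Cardinal.{u}} (hα : ℵ₀ ≤ α)
    (hι : #ι < α.ord.cof) (S : ι → Set X) (hS : ∀ i, #(S i) < α) : #(⋃ i, S i) < α :=
  (mk_iUnion_le S).trans_lt <| mul_lt_of_lt hα (hι.trans_le (Ordinal.cof_ord_le α))
    (Cardinal.iSup_lt_of_lt_cof_ord hι hS)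

/-- The second coordinates of the points of `F Y`, for `Y` a finite subset of `B × X`. The finite
sets are indexed by lists, and the value is `∅` when `X` is infinite. -/
def sndTrace {A B : Type u} (F : Set (B × A) → Set (B × A)) (X : Set A) : Set A :=
  {a | X.Finite ∧ a ∈ ⋃ l : List (B × X),
    Prod.snd '' F {z | z ∈ l.map (Prod.map id Subtype.val)}}

/-- For finite `X` there are at most `#B` lists over `B × X`, each contributing at most `#B` points. -/
theorem mk_sndTrace_le {A B : Type u} (F : Set (B × A) → Set (B × A))
    (hB : ℵ₀ ≤ #B) (hF : ∀ Y, #(F Y) ≤ #B) (X : Set A) : #(sndTrace F X) ≤ #B := by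
  by_cases hX : X.Finite
  · have hBX : #(B × X) ≤ #B := by
      rw [mk_prod, lift_id, lift_id]
      exact mul_le_of_le hB le_rfl ((lt_aleph0_iff_set_finite.2 hX).le.trans hB)
    calc #(sndTrace F X)
        ≤ #(⋃ l : List (B × X), Prod.snd '' F {z | z ∈ l.map (Prod.map id Subtype.val)}) :=
          mk_le_mk_of_subset fun a ha => ha.2
      _ ≤ _ := mk_iUnion_le _
      _ ≤ #B := mul_le_of_le hB ((mk_list_le_max _).trans (max_le hB hBX))
          (ciSup_le' fun l => mk_image_le.trans (hF _))
  · have : sndTrace F X = ∅ := Set.eq_empty_of_forall_notMem fun a ha => hX ha.1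
    simp [this]

/-- The defining property of `sndTrace`, for the finite rectangles to which it is applied. -/
theorem mem_sndTrace {A B : Type u} {F : Set (B × A) → Set (B × A)} {X : Set A} (hX : X.Finite)
    {Y : Set B} (hY : Y.Finite) {z : B × A} (hz : z ∈ F (Y ×ˢ X)) : z.2 ∈ sndTrace F X := by
  refine ⟨hX, ?_⟩
  have : Finite X := hX
  have hfin : (Y ×ˢ (Set.univ : Set X)).Finite := hY.prod Set.finite_univ
  refine Set.mem_iUnion.2 ⟨hfin.toFinset.toList, z, ?_, rfl⟩
  convert hz
  ext ⟨b, a⟩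
  simp only [List.mem_map, Finset.mem_toList, Set.Finite.mem_toFinset, Set.mem_ofPred_eq]
  constructor
  · rintro ⟨⟨b', a'⟩, h, h'⟩
    simp only [Prod.map_apply, id, Prod.mk.injEq] at h'
    obtain ⟨rfl, rfl⟩ := h'
    exact ⟨h.1, a'.2⟩
  · rintro ⟨hb, ha⟩
    exact ⟨(b, ⟨a, ha⟩), ⟨hb, trivial⟩, rfl⟩

/-- Product Lemma: if `P` and `Q` are lower finite posets with zero, `α ≤ β ≤ γ` are
infinite cardinals with `|Q| < cf(α)`, `(β,<α)⤳P`, and `(γ,<β⁺)⤳Q`, then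
`(γ,<α)⤳P × Q`. -/
theorem stmt6 (P : Type u) [PartialOrder P] [OrderBot P]
    (Q : Type u) [PartialOrder Q] [OrderBot Q]
    (hPlf : ∀ x : P, (Set.Iic x).Finite) (hQlf : ∀ y : Q, (Set.Iic y).Finite)
    (α β γ : Cardinal.{u}) (hα : ℵ₀ ≤ α) (hβ : ℵ₀ ≤ β) (hγ : ℵ₀ ≤ γ)
    (hαβ : α ≤ β) (hβγ : β ≤ γ) (hQc : #Q < α.ord.cof)
    (h1 : Leadsto β α P) (h2 : Leadsto γ (Order.succ β) Q) :
    Leadsto γ α (P × Q) := by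
  intro A hA F₀ hF₀
  obtain ⟨B, rfl⟩ : ∃ B : Type u, #B = β := ⟨β.out, mk_out β⟩
  obtain ⟨e⟩ : Nonempty (B × A ≃ A) := by
    rw [← Cardinal.eq, mk_prod, lift_id, lift_id, hA]
    exact mul_eq_right hγ hβγ (aleph0_pos.trans_le hβ).ne'
  -- `F` is `F₀` transported along `e`.
  let F : Set (B × A) → Set (B × A) := fun Y => e ⁻¹' F₀ (e '' Y)
  have hF : ∀ Y, #(F Y) < α := fun Y =>
    (mk_preimage_of_injective _ _ e.injective).trans_lt (hF₀ _)
  obtain ⟨g, hg, hgF⟩ := h2 A hA (sndTrace F) fun X =>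
    Order.lt_succ_of_le (mk_sndTrace_le F hβ (fun Y => (hF Y).le.trans hαβ) X)
  obtain ⟨f, hf, hfF⟩ := h1 B rfl
    (fun X => ⋃ q : Q, Prod.fst '' F (X ×ˢ (g '' Set.Iic q))) fun X =>
      mk_iUnion_lt_of_lt_cof hα hQc _ fun q => mk_image_le.trans_lt (hF _)
  have himage (x : P × Q) : (fun r : P × Q => e (f r.1, g r.2)) '' Set.Iic x =
      e '' ((f '' Set.Iic x.1) ×ˢ (g '' Set.Iic x.2)) := by
    rw [Set.prod_image_image_eq, Set.Iic_prod_eq, Set.image_image]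
  refine ⟨fun r => e (f r.1, g r.2), e.injective.comp (hf.prodMap hg), ?_⟩
  rintro x y hxy _ ⟨hw, r, hr, rfl⟩
  rw [himage] at hw ⊢
  have hz : (f r.1, g r.2) ∈ F ((f '' Set.Iic x.1) ×ˢ (g '' Set.Iic x.2)) := hw
  refine ⟨_, ⟨?_, ?_⟩, rfl⟩
  · exact hfF x.1 y.1 hxy.1 ⟨Set.mem_iUnion.2 ⟨x.2, _, hz, rfl⟩, r.1, hr.1, rfl⟩
  · exact hgF x.2 y.2 hxy.2
      ⟨mem_sndTrace ((hQlf _).image g) ((hPlf _).image f) hz, r.2, hr.2, rfl⟩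
end

section
/- Let P and Q be finite posets each having a least element, and let m and n be positive integers. If (κ^{+(m-1)},<κ)⤳P holds for every infinite cardinal κ and (λ^{+(n-1)},<λ)⤳Q holds for every infinite cardinal λ, then (κ^{+(m+n-1)},<κ)⤳(P × Q) holds for every infinite cardinal κ, where P × Q carries the componentwise ordering. -/
/-!
Let `μ = κ^{+(m-1)}`, so that `κ^{+m} = μ⁺` and `κ^{+(m+n-1)} = (μ⁺)^{+(n-1)}`. Identify the ground
set `A` with `A × M` where `#M = μ`, and look for the map `P × Q → A × M` in the product form
`(p, q) ↦ (g q, h p)`, which sends the ideal below `(p, q)` to `g '' Iic q ×ˢ h '' Iic p`.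

* The hypothesis on `Q`, used at `μ⁺`, gives `g` for the set map sending `X` to the first
  coordinates of all `F (X ×ˢ Y)`, `Y ⊆ M` finite. There are only `μ` such `Y`, so its values
  have size `≤ μ < μ⁺`.
* With `g` fixed, the hypothesis on `P`, used at `κ`, gives `h` for the set map sending `Y` to the
  second coordinates of all `F (g '' Iic q ×ˢ Y)`, `q ∈ Q`: a finite union of sets of size `< κ`.

A point `(g q'', h p'')` of `F (g '' Iic q ×ˢ h '' Iic p)` with `p'' ≤ p'` and `q'' ≤ q'` then has
`q'' ≤ q` by the choice of `g` (as `h '' Iic p` is finite) and `p'' ≤ p` by the choice of `h`.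
-/

universe u v w

open Cardinal

/-- The `n`-th cardinal successor `κ⁺ⁿ`. -/
noncomputable def succN (κ : Cardinal.{u}) (n : ℕ) : Cardinal.{u} := Order.succ^[n] κ

lemma le_succN (κ : Cardinal.{u}) (n : ℕ) : κ ≤ succN κ n :=
  Order.le_succ_iterate n κ

lemma succN_succ (κ : Cardinal.{u}) (n : ℕ) : succN κ (n + 1) = Order.succ (succN κ n) :=
  Function.iterate_succ_apply' _ _ _

lemma succN_succN (κ : Cardinal.{u}) (m n : ℕ) : succN (succN κ m) n = succN κ (n + m) :=
  (Function.iterate_add_apply _ _ _ _).symm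

lemma mk_iUnion_lt_of_finite {ι : Type w} [Finite ι] {α : Type u} {κ : Cardinal.{u}}
    (hκ : ℵ₀ ≤ κ) (s : ι → Set α) (hs : ∀ i, #(s i) < κ) : #(⋃ i, s i : Set α) < κ := by
  have key : ∀ t : Set ι, t.Finite → #(⋃ i ∈ t, s i : Set α) < κ := by
    intro t ht
    induction t, ht using Set.Finite.induction_on with
    | empty => simpa using aleph0_pos.trans_le hκ
    | insert _ _ ih =>
      rw [Set.biUnion_insert]
      exact (mk_union_le _ _).trans_lt (add_lt_of_lt hκ (hs _) ih)
  simpa using key Set.univ Set.finite_univ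

/-- The product step on a ground set which is already a product `A × M`. -/
lemma exists_product_map {P : Type v} [PartialOrder P] [Finite P]
    {Q : Type w} [PartialOrder Q] [Finite Q] {κ μ : Cardinal.{u}} (hκ : ℵ₀ ≤ κ) (hκμ : κ ≤ μ)
    {A M : Type u} (hM : #M = μ) (hP : Leadsto μ κ P) (hQ : Leadsto #A (Order.succ μ) Q)
    (F : Set (A × M) → Set (A × M)) (hF : ∀ X, #(F X) < κ) :
    ∃ f : P × Q → A × M, Function.Injective f ∧ ∀ x y : P × Q, x ≤ y →
      F (f '' Set.Iic x) ∩ f '' Set.Iic y ⊆ f '' Set.Iic x := by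
  have hμ : ℵ₀ ≤ μ := hκ.trans hκμ
  have : Infinite M := by rwa [infinite_iff, hM]
  obtain ⟨g, hg, hgF⟩ := hQ A rfl (fun X => ⋃ Y : Finset M, Prod.fst '' F (X ×ˢ (Y : Set M))) (by
    intro X
    rw [Order.lt_succ_iff]
    refine (mk_iUnion_le _).trans ?_
    rw [mk_finset_of_infinite, hM]
    refine (mul_le_mul' le_rfl
      (ciSup_le' fun Y => mk_image_le.trans ((hF _).le.trans hκμ))).trans ?_
    exact (mul_eq_self hμ).le)
  obtain ⟨h, hh, hhF⟩ := hP M hM (fun Y => ⋃ q : Q, Prod.snd '' F ((g '' Set.Iic q) ×ˢ Y))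
    (fun Y => mk_iUnion_lt_of_finite hκ _ fun q => mk_image_le.trans_lt (hF _))
  have himg : ∀ x : P × Q, (fun z : P × Q => (g z.2, h z.1)) '' Set.Iic x =
      (g '' Set.Iic x.2) ×ˢ (h '' Set.Iic x.1) := by
    rintro ⟨p, q⟩
    ext ⟨a, t⟩
    constructor
    · rintro ⟨z, hz, hza⟩
      obtain ⟨rfl, rfl⟩ := Prod.mk.inj hza
      exact ⟨⟨_, hz.2, rfl⟩, ⟨_, hz.1, rfl⟩⟩
    · rintro ⟨⟨q', hq', rfl⟩, ⟨p', hp', rfl⟩⟩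
      exact ⟨(p', q'), ⟨hp', hq'⟩, rfl⟩
  refine ⟨fun z => (g z.2, h z.1), ?_, ?_⟩
  · rintro ⟨p, q⟩ ⟨p', q'⟩ hz
    obtain ⟨h1, h2⟩ := Prod.mk.inj hz
    exact Prod.ext (hh h2) (hg h1)
  · intro x y hxy
    rw [himg, himg]
    rintro ⟨a, t⟩ ⟨haF, ha, ht⟩
    refine ⟨hgF x.2 y.2 hxy.2 ⟨?_, ha⟩, hhF x.1 y.1 hxy.1 ⟨?_, ht⟩⟩
    · have hfin : (h '' Set.Iic x.1).Finite := Set.toFinite _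
      refine Set.mem_iUnion.2 ⟨hfin.toFinset, (a, t), ?_, rfl⟩
      rwa [hfin.coe_toFinset]
    · exact Set.mem_iUnion.2 ⟨x.2, (a, t), haF, rfl⟩

/-- If `(κ^{+(m-1)},<κ)⤳P` and `(λ^{+(n-1)},<λ)⤳Q` hold for all infinite cardinals
`κ`, `λ`, where `P` and `Q` are finite posets with zero, then
`(κ^{+(m+n-1)},<κ)⤳P × Q` holds for every infinite cardinal `κ`. -/
theorem stmt7 (P : Type v) [PartialOrder P] [Finite P] [OrderBot P]
    (Q : Type w) [PartialOrder Q] [Finite Q] [OrderBot Q]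
    (m n : ℕ) (hm : 0 < m) (hn : 0 < n)
    (hP : ∀ κ : Cardinal.{u}, ℵ₀ ≤ κ → Leadsto (succN κ (m - 1)) κ P)
    (hQ : ∀ lam : Cardinal.{u}, ℵ₀ ≤ lam → Leadsto (succN lam (n - 1)) lam Q) :
    ∀ κ : Cardinal.{u}, ℵ₀ ≤ κ → Leadsto (succN κ (m + n - 1)) κ (P × Q) := by
  intro κ hκ A hA F hF
  obtain ⟨m, rfl⟩ := Nat.exists_eq_add_of_lt hm
  obtain ⟨n, rfl⟩ := Nat.exists_eq_add_of_lt hn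
  simp only [zero_add, Nat.add_sub_cancel] at hP hQ
  set μ := succN κ m with hμ
  have hκμ : κ ≤ μ := le_succN κ m
  have hA' : #A = succN (Order.succ μ) n := by
    rw [hA, hμ, ← succN_succ, succN_succN]
    congr 1
    omega
  have hμA : μ ≤ #A := by
    rw [hA']
    exact (Order.le_succ μ).trans (le_succN _ _)
  have hAinf : ℵ₀ ≤ #A := hκ.trans (hκμ.trans hμA)
  have hcard : #(A × μ.out) = #A := by
    rw [mk_prod, lift_id, lift_id, mk_out]
    exact mul_eq_left hAinf hμA (aleph0_pos.trans_le (hκ.trans hκμ)).ne'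
  obtain ⟨e⟩ := Cardinal.eq.1 hcard
  have hQ' : Leadsto #A (Order.succ μ) Q := by
    rw [hA']
    exact hQ _ (hκ.trans (hκμ.trans (Order.le_succ μ)))
  obtain ⟨f, hf, hfF⟩ := exists_product_map hκ hκμ (mk_out μ) (hP κ hκ) hQ'
    (fun X => e.symm '' F (e '' X)) (fun X => mk_image_le.trans_lt (hF _))
  refine ⟨e ∘ f, e.injective.comp hf, fun x y hxy => ?_⟩
  rw [Set.image_comp, Set.image_comp]
  rintro _ ⟨haF, b, hb, rfl⟩
  exact ⟨b, hfF x y hxy ⟨⟨e b, haF, e.symm_apply_apply b⟩, hb⟩, rfl⟩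
end
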